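/- Let κ be a (P,ρ)-kernel on a locally finite weakly ranked poset (P,ρ), with left KLS function g and Chow function ℋ. Then for every s ≤ t in P, ℋ_{st}(x) = Σ over all chains s = p_0 < p_1 < ⋯ < p_m ≤ t (m ≥ 0) of the product (Π_{i=1}^{m} (g^rev_{p_{i−1}p_i}(x) − x·g_{p_{i−1}p_i}(x))/(x−1)) · g_{p_m t}(x). -/

import Mathlib

/-!
In the incidence algebra the chain sum is `(δ - Q)⁻¹ g`, where `Q` is `klsQ` off the diagonal and
`0` on it, so the theorem amounts to `(δ - Q) H = g`. As `H = -κ̄⁻¹`, this follows from the identity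
`g κ̄ = Q - δ`, and off the diagonal that is the computation
`(x - 1) (g κ̄)_{st} = (g κ)_{st} - g_{st} - (x - 1) g_{st} = g^rev_{st} - x g_{st}`.
It uses that `x - 1` divides `κ_{st}` for `s < t` (`X_sub_one_dvd_kernel`): at `x = 1` the kernel
coincides with its reversal, so `κ(1)` is a unipotent element of square `δ`, hence `κ(1) = δ`.

The resulting recursion `H_{st} = g_{st} + ∑_{s < w ≤ t} Q_{sw} H_{wt}` (`chow_rec`) is matched with
the recursion of the chain sums obtained by removing the first element of a chain
(`chainSum_succ`), by induction on the size of the interval.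
-/

open Finset Polynomial
open scoped Classical

noncomputable section

variable {α : Type*}

/-- Convolution product in the incidence algebra of a locally finite poset over `ℤ[x]`.
Only the values on intervals `s ≤ t` are relevant. -/
def conv [PartialOrder α] [LocallyFiniteOrder α] (a b : α → α → Polynomial ℤ) :
    α → α → Polynomial ℤ :=
  fun s t => ∑ w ∈ Finset.Icc s t, a s w * b w t

/-- The identity `δ` of the incidence algebra. -/
def dlt [PartialOrder α] : α → α → Polynomial ℤ :=
  fun s t => if s = t then 1 else 0

/-- The involution `a ↦ a^rev`, given by `(a^rev)_{st}(x) = x^{ρ_{st}} a_{st}(1/x)`. -/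
def rev (ρ : α → α → ℕ) (a : α → α → Polynomial ℤ) : α → α → Polynomial ℤ :=
  fun s t => (a s t).reflect (ρ s t)

/-- A weak rank function on a poset. -/
structure IsWeakRank [Preorder α] (ρ : α → α → ℕ) : Prop where
  pos : ∀ ⦃s t : α⦄, s < t → 0 < ρ s t
  add : ∀ ⦃s w t : α⦄, s ≤ w → w ≤ t → ρ s t = ρ s w + ρ w t

/-- `κ` is a `(P,ρ)`-kernel: it lies in `I_ρ(P)`, is `1` on the diagonal, and `κ⁻¹ = κ^rev`. -/
structure IsKernel [PartialOrder α] [LocallyFiniteOrder α] (ρ : α → α → ℕ)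
    (κ : α → α → Polynomial ℤ) : Prop where
  degLE : ∀ ⦃s t : α⦄, s ≤ t → (κ s t).natDegree ≤ ρ s t
  diag : ∀ s : α, κ s s = 1
  left : ∀ ⦃s t : α⦄, s ≤ t → conv (rev ρ κ) κ s t = dlt s t
  right : ∀ ⦃s t : α⦄, s ≤ t → conv κ (rev ρ κ) s t = dlt s t

/-- The reduced kernel `κ̄`: `κ̄_{st} = κ_{st}/(x-1)` for `s < t` and `κ̄_{ss} = -1`. -/
def red [PartialOrder α] (κ : α → α → Polynomial ℤ) : α → α → Polynomial ℤ :=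
  fun s t => if s = t then -1 else κ s t /ₘ (X - 1)

/-- `H` is the Chow function of `κ`, i.e. `H = -(κ̄)⁻¹`. -/
structure IsChow [PartialOrder α] [LocallyFiniteOrder α] (κ H : α → α → Polynomial ℤ) : Prop where
  left : ∀ ⦃s t : α⦄, s ≤ t → conv (red κ) H s t = -dlt s t
  right : ∀ ⦃s t : α⦄, s ≤ t → conv H (red κ) s t = -dlt s t

/-- `f` is the right KLS function of the kernel `κ`. -/
structure IsRightKLS [PartialOrder α] [LocallyFiniteOrder α] (ρ : α → α → ℕ)
    (κ f : α → α → Polynomial ℤ) : Prop where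
  diag : ∀ s : α, f s s = 1
  degLT : ∀ ⦃s t : α⦄, s < t → 2 * (f s t).natDegree < ρ s t
  rev_eq : ∀ ⦃s t : α⦄, s ≤ t → rev ρ f s t = conv κ f s t

/-- `g` is the left KLS function of the kernel `κ`. -/
structure IsLeftKLS [PartialOrder α] [LocallyFiniteOrder α] (ρ : α → α → ℕ)
    (κ g : α → α → Polynomial ℤ) : Prop where
  diag : ∀ s : α, g s s = 1
  degLT : ∀ ⦃s t : α⦄, s < t → 2 * (g s t).natDegree < ρ s t
  rev_eq : ∀ ⦃s t : α⦄, s ≤ t → rev ρ g s t = conv g κ s t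

/-- `p` is symmetric with center of symmetry `d/2`, i.e. `p(x) = x^d p(1/x)`. -/
def PolySymm (d : ℕ) (p : Polynomial ℤ) : Prop := p.natDegree ≤ d ∧ p.reflect d = p

/-- All coefficients of `p` are non-negative. -/
def PolyNonneg (p : Polynomial ℤ) : Prop := ∀ n, 0 ≤ p.coeff n

/-- The coefficient sequence of `p` is unimodal. -/
def PolyUnimodal (p : Polynomial ℤ) : Prop :=
  ∃ j, (∀ i < j, p.coeff i ≤ p.coeff (i + 1)) ∧ ∀ i, j ≤ i → p.coeff (i + 1) ≤ p.coeff i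

end

/-- The polynomial `(g^rev_{st}(x) - x·g_{st}(x))/(x-1)` (an exact quotient). -/
noncomputable def klsQ [PartialOrder α] (ρ : α → α → ℕ) (g : α → α → Polynomial ℤ) :
    α → α → Polynomial ℤ :=
  fun s t => (rev ρ g s t - X * g s t) /ₘ (X - 1)

theorem eval_one_rev {α : Type*} (ρ : α → α → ℕ) (a : α → α → Polynomial ℤ) (s t : α)
    (h : (a s t).natDegree ≤ ρ s t) : (rev ρ a s t).eval 1 = (a s t).eval 1 := by
  have : Invertible (1 : ℤ) := invertibleOne
  have := Polynomial.eval₂_reflect_mul_pow (RingHom.id ℤ) (1 : ℤ) (ρ s t) (a s t) h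
  simpa [rev, Polynomial.eval₂_id] using this

/-- Off the diagonal a kernel vanishes at `1`. By induction on the size of `[s, t]`,
all products in `(κ κ^rev)_{st}(1) = 0` vanish except the two end terms, which
leaves `2 κ_{st}(1) = 0`. -/
theorem kernel_eval_one {α : Type*} [PartialOrder α] [LocallyFiniteOrder α] {ρ : α → α → ℕ}
    {κ : α → α → Polynomial ℤ} (hκ : IsKernel ρ κ) (n : ℕ) :
    ∀ s t : α, s < t → (Finset.Icc s t).card ≤ n → (κ s t).eval 1 = 0 := by
  induction n with
  | zero =>
    intro s t hst hn
    have : s ∈ Finset.Icc s t := Finset.left_mem_Icc.2 hst.le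
    have := Finset.card_pos.2 ⟨s, this⟩
    omega
  | succ n ih =>
    intro s t hst hn
    have h := congrArg (Polynomial.eval 1) (hκ.right hst.le)
    simp only [conv, dlt, if_neg hst.ne, Polynomial.eval_finsetSum, Polynomial.eval_mul,
      Polynomial.eval_zero] at h
    rw [← Finset.sum_subset (s₁ := {s, t})] at h
    · rw [Finset.sum_pair hst.ne, eval_one_rev _ _ _ _ (hκ.degLE hst.le),
        eval_one_rev _ _ _ _ (hκ.degLE le_rfl), hκ.diag, hκ.diag] at h
      simp only [Polynomial.eval_one] at h
      linarith
    · intro w hw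
      simp only [Finset.mem_insert, Finset.mem_singleton] at hw
      rcases hw with rfl | rfl
      · exact Finset.left_mem_Icc.2 hst.le
      · exact Finset.right_mem_Icc.2 hst.le
    · intro w hw hw'
      simp only [Finset.mem_insert, Finset.mem_singleton, not_or] at hw'
      obtain ⟨hsw, hwt⟩ := Finset.mem_Icc.1 hw
      have hlt : (Finset.Icc s w).card < (Finset.Icc s t).card :=
        Finset.card_lt_card (Finset.Icc_ssubset_Icc_right hst.le le_rfl
          (lt_of_le_of_ne hwt hw'.2))
      rw [ih s w (lt_of_le_of_ne hsw (Ne.symm hw'.1)) (by omega), zero_mul]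

theorem X_sub_one_dvd_kernel {α : Type*} [PartialOrder α] [LocallyFiniteOrder α]
    {ρ : α → α → ℕ} {κ : α → α → Polynomial ℤ} (hκ : IsKernel ρ κ) {s t : α} (hst : s < t) :
    (X - 1 : Polynomial ℤ) ∣ κ s t := by
  rw [← Polynomial.C_1, Polynomial.dvd_iff_isRoot]
  exact kernel_eval_one hκ _ s t hst le_rfl

theorem X_sub_one_monic : (X - 1 : Polynomial ℤ).Monic := by
  rw [← Polynomial.C_1]
  exact Polynomial.monic_X_sub_C 1

theorem X_sub_one_mul_red {α : Type*} [PartialOrder α] [LocallyFiniteOrder α]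
    {ρ : α → α → ℕ} {κ : α → α → Polynomial ℤ} (hκ : IsKernel ρ κ) {s t : α} (hst : s ≤ t) :
    (X - 1 : Polynomial ℤ) * red κ s t = κ s t - if s = t then X else 0 := by
  rcases eq_or_lt_of_le hst with rfl | hlt
  · simp only [red, if_true, hκ.diag]
    ring
  · obtain ⟨q, hq⟩ := X_sub_one_dvd_kernel hκ hlt
    simp only [red, if_neg hlt.ne, sub_zero]
    rw [hq, Polynomial.mul_divByMonic_cancel_left _ X_sub_one_monic]

/-- The identity `klsQ = g κ̄`. It includes the diagonal, where both sides are `-1`. -/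
theorem klsQ_eq_conv {α : Type*} [PartialOrder α] [LocallyFiniteOrder α]
    {ρ : α → α → ℕ} {κ g : α → α → Polynomial ℤ} (hκ : IsKernel ρ κ) (hg : IsLeftKLS ρ κ g)
    {s t : α} (hst : s ≤ t) : klsQ ρ g s t = conv g (red κ) s t := by
  have h : rev ρ g s t - X * g s t = (X - 1) * conv g (red κ) s t := by
    have h1 : ∀ w ∈ Finset.Icc s t, (X - 1 : Polynomial ℤ) * (g s w * red κ w t)
        = g s w * κ w t - if w = t then X * g s w else 0 := by
      intro w hw
      rw [mul_left_comm, X_sub_one_mul_red hκ (Finset.mem_Icc.1 hw).2]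
      split_ifs <;> ring
    rw [hg.rev_eq hst, conv, conv, Finset.mul_sum, Finset.sum_congr rfl h1,
      Finset.sum_sub_distrib, Finset.sum_ite_eq', if_pos (Finset.right_mem_Icc.2 hst)]
  rw [klsQ, h, Polynomial.mul_divByMonic_cancel_left _ X_sub_one_monic]

theorem conv_assoc {α : Type*} [PartialOrder α] [LocallyFiniteOrder α]
    (a b c : α → α → Polynomial ℤ) (s t : α) :
    conv (conv a b) c s t = conv a (conv b c) s t := by
  simp only [conv, Finset.sum_mul, Finset.mul_sum, mul_assoc]
  refine Finset.sum_comm' ?_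
  intro x y
  simp only [Finset.mem_Icc]
  constructor
  · rintro ⟨⟨h1, h2⟩, h3, h4⟩
    exact ⟨⟨h4, h2⟩, h3, h4.trans h2⟩
  · rintro ⟨⟨h1, h2⟩, h3, h4⟩
    exact ⟨⟨h3.trans h1, h2⟩, h3, h1⟩

theorem chow_rec {α : Type*} [PartialOrder α] [LocallyFiniteOrder α]
    {ρ : α → α → ℕ} {κ g H : α → α → Polynomial ℤ} (hκ : IsKernel ρ κ) (hg : IsLeftKLS ρ κ g)
    (hH : IsChow κ H) {s t : α} (hst : s ≤ t) :
    H s t = g s t + ∑ w ∈ Finset.Ioc s t, klsQ ρ g s w * H w t := by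
  have h1 : conv (conv g (red κ)) H s t = - g s t := by
    rw [conv_assoc, conv]
    have h2 : ∀ w ∈ Finset.Icc s t, g s w * conv (red κ) H w t = if w = t then - g s w else 0 := by
      intro w hw
      rw [hH.left (Finset.mem_Icc.1 hw).2, dlt]
      split_ifs <;> simp
    rw [Finset.sum_congr rfl h2, Finset.sum_ite_eq', if_pos (Finset.right_mem_Icc.2 hst)]
  have h3 : conv g (red κ) s s = -1 := by
    simp [conv, red, hg.diag]
  rw [conv, ← Finset.Ioc_insert_left hst, Finset.sum_insert Finset.left_notMem_Ioc, h3] at h1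
  rw [Finset.sum_congr rfl fun w hw => by
    rw [klsQ_eq_conv hκ hg (Finset.mem_Ioc.1 hw).1.le]]
  linear_combination -h1

/-- The weighted sum over chains `u = p_0 < p_1 < ⋯ < p_m` of fixed length in a finite poset, the
weight of a chain being `(∏ Q p_{i-1} p_i) * G p_m`. -/
noncomputable def chainSum {T : Type*} [Fintype T] [PartialOrder T] (Q : T → T → Polynomial ℤ)
    (G : T → Polynomial ℤ) (m : ℕ) (u : T) : Polynomial ℤ :=
  ∑ p : Fin (m + 1) → T, if StrictMono p ∧ p 0 = u then
    (∏ i : Fin m, Q (p i.castSucc) (p i.succ)) * G (p (Fin.last m)) else 0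

theorem chainSum_zero {T : Type*} [Fintype T] [PartialOrder T] (Q : T → T → Polynomial ℤ)
    (G : T → Polynomial ℤ) (u : T) : chainSum Q G 0 u = G u := by
  rw [chainSum, Finset.sum_eq_single (fun _ => u)]
  · simp [Subsingleton.strictMono]
  · intro p _ hp
    rw [if_neg]
    rintro ⟨-, h⟩
    exact hp (funext fun i => by rw [Fin.fin_one_eq_zero i, ← h])
  · simp

theorem chainSum_succ {T : Type*} [Fintype T] [PartialOrder T] (Q : T → T → Polynomial ℤ)
    (G : T → Polynomial ℤ) (m : ℕ) (u : T) :
    chainSum Q G (m + 1) u = ∑ w : T, if u < w then Q u w * chainSum Q G m w else 0 := by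
  have hcons : ∀ (a : T) (q : Fin (m + 1) → T),
      StrictMono (Fin.cons a q : Fin (m + 2) → T) ↔ a < q 0 ∧ StrictMono q :=
    fun a q => strictMono_vecCons
  have hR : ∀ w : T, (if u < w then Q u w * chainSum Q G m w else 0)
      = ∑ q : Fin (m + 1) → T, if q 0 = w then (if u < q 0 ∧ StrictMono q then
        Q u (q 0) * ((∏ i : Fin m, Q (q i.castSucc) (q i.succ)) * G (q (Fin.last m))) else 0)
        else 0 := by
    intro w
    by_cases huw : u < w
    · rw [if_pos huw, chainSum, Finset.mul_sum]
      refine Finset.sum_congr rfl fun q _ => ?_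
      by_cases hq : q 0 = w
      · subst hq
        simp [huw]
      · simp [hq]
    · rw [if_neg huw]
      refine (Finset.sum_eq_zero fun q _ => ?_).symm
      by_cases hq : q 0 = w
      · subst hq
        simp [huw]
      · simp [hq]
  simp only [hR]
  rw [Finset.sum_comm, chainSum, ← (Fin.consEquiv fun _ : Fin (m + 2) => T).sum_comp,
    Fintype.sum_prod_type, Finset.sum_comm]
  refine Finset.sum_congr rfl fun q _ => ?_
  rw [Finset.sum_ite_eq, if_pos (Finset.mem_univ _), Finset.sum_eq_single u]
  · simp [hcons, Fin.consEquiv, Fin.prod_univ_succ, ← Fin.succ_last, mul_assoc]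
  · intro a _ ha
    simp [Fin.consEquiv, ha]
  · simp

/-- Summing over lengths `m < N` captures all chains from `u` to `t` once `N` is at least the size
of `[u, t]`. The ambient interval `[s, t]` is kept fixed while `u` moves up. -/
theorem chow_eq_sum_chainSum {α : Type*} [PartialOrder α] [LocallyFiniteOrder α]
    {ρ : α → α → ℕ} {κ g H : α → α → Polynomial ℤ} (hκ : IsKernel ρ κ) (hg : IsLeftKLS ρ κ g)
    (hH : IsChow κ H) (s t : α) (N : ℕ) :
    ∀ u : ↥(Finset.Icc s t), (Finset.Icc (u : α) t).card ≤ N →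
      H u t = ∑ m ∈ Finset.range N,
        chainSum (fun a b : ↥(Finset.Icc s t) => klsQ ρ g a b) (fun a => g a t) m u := by
  induction N with
  | zero =>
    intro u hu
    have := Finset.card_pos.2 ⟨(u : α), Finset.left_mem_Icc.2 (Finset.mem_Icc.1 u.2).2⟩
    omega
  | succ N ih =>
    intro u hu
    have hut : (u : α) ≤ t := (Finset.mem_Icc.1 u.2).2
    rw [Finset.sum_range_succ', chainSum_zero, chow_rec hκ hg hH hut, add_comm]
    congr 1
    simp only [chainSum_succ]
    rw [Finset.sum_comm]
    have h1 : ∀ w : ↥(Finset.Icc s t), (∑ m ∈ Finset.range N, if u < w then klsQ ρ g u w *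
        chainSum (fun a b : ↥(Finset.Icc s t) => klsQ ρ g a b) (fun a => g a t) m w else 0)
        = if (u : α) < w then klsQ ρ g u w * H w t else 0 := by
      intro w
      by_cases h : (u : α) < w
      · have h' : u < w := h
        have hlt : (Finset.Icc (w : α) t).card < (Finset.Icc (u : α) t).card :=
          Finset.card_lt_card (Finset.Icc_ssubset_Icc_left hut h le_rfl)
        simp only [if_pos h, if_pos h', ← Finset.mul_sum]
        rw [ih w (by omega)]
      · have h' : ¬ u < w := h
        simp [h, h']
    rw [Finset.sum_congr rfl fun w _ => h1 w,
      Finset.sum_coe_sort (Finset.Icc s t)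
        (fun w => if (u : α) < w then klsQ ρ g u w * H w t else 0), ← Finset.sum_filter]
    refine Finset.sum_congr ?_ fun _ _ => rfl
    ext w
    simp only [Finset.mem_Ioc, Finset.mem_filter, Finset.mem_Icc]
    have := (Finset.mem_Icc.1 u.2).1
    exact ⟨fun h => ⟨⟨this.trans h.1.le, h.2⟩, h.1⟩, fun h => ⟨h.2, h.1.2⟩⟩

/-- Theorem 3.9: the Chow function as a sum over chains
`s = p_0 < p_1 < ⋯ < p_m ≤ t`:
`ℋ_{st} = Σ (Π_{i=1}^m (g^rev_{p_{i-1}p_i} - x g_{p_{i-1}p_i})/(x-1)) · g_{p_m t}`. -/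
theorem chow_as_sum_over_chains [PartialOrder α] [LocallyFiniteOrder α]
    (ρ : α → α → ℕ) (hρ : IsWeakRank ρ)
    (κ : α → α → Polynomial ℤ) (hκ : IsKernel ρ κ)
    (H : α → α → Polynomial ℤ) (hH : IsChow κ H)
    (g : α → α → Polynomial ℤ) (hg : IsLeftKLS ρ κ g)
    (s t : α) (hst : s ≤ t) :
    H s t = ∑ m ∈ Finset.range (Finset.Icc s t).card,
      ∑ p ∈ Finset.univ.filter
          (fun p : Fin (m + 1) → ↥(Finset.Icc s t) => StrictMono p ∧ (p 0 : α) = s),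
        (∏ i : Fin m, klsQ ρ g (p i.castSucc : α) (p i.succ : α))
          * g (p (Fin.last m) : α) t := by 
  rw [chow_eq_sum_chainSum hκ hg hH s t _ ⟨s, Finset.left_mem_Icc.2 hst⟩ le_rfl]
  refine Finset.sum_congr rfl fun m _ => ?_
  rw [chainSum, Finset.sum_filter]
  simp only [Subtype.ext_iff]
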